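/- Let G be a finite r-regular graph with girth g, equipped with a random label assignment with probabilities (p₀,p). Let u be a vertex with neighbours v₁,…,v_r, and fix nonnegative integers i, k with 2(i+2) < g−2. For each j, let T_j² be the tree rooted at v_j given by the component containing v_j of the graph induced on {v : d(u,v) ≤ 2} minus u, and let X₁,…,X_r be colourings (with colours purple, blue, orange, white) of the tree isomorphic to the rooted trees T_j². Let E_j be the event that T_j² has colouring X_j at time i. Then: (1) conditional on u ∈ W_i, the events E₁,…,E_r are mutually independent, i.e. P(E₁ ∧ ⋯ ∧ E_r | u ∈ W_i) = ∏_{j=1}^r P(E_j | u ∈ W_i); and (2) for any l, conditional on u ∈ B_i and v_l ∈ R_{≤i}, the events E_j for j ≠ l are mutually independent. -/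

import Mathlib

open MeasureTheory ProbabilityTheory Filter Set

namespace InducedForest

variable {V : Type*}

/-- Label `i` is *relevant* for vertex `v` (w.r.t. the label assignment `S`):
either `i = 0` and `0 ∈ S v`, or `i ∈ S v`, no `j < i` is relevant for `v`, and
there is a unique neighbour of `v` having a relevant label strictly smaller than `i`. -/
def Relevant (G : SimpleGraph V) (S : V → Set ℕ) (i : ℕ) : V → Prop :=
  Nat.strongRecOn i (fun i ih v =>
    (i = 0 ∧ 0 ∈ S v) ∨
    (i ∈ S v ∧ (∀ j, (h : j < i) → ¬ ih j h v) ∧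
      (∃! u, G.Adj v u ∧ ∃ j, ∃ h : j < i, ih j h u)))

/-- `v` has some relevant label `≤ l`, i.e. `v ∈ R_{≤ l}`. -/
def RelevantLe (G : SimpleGraph V) (S : V → Set ℕ) (l : ℕ) (v : V) : Prop :=
  ∃ i ≤ l, Relevant G S i v

inductive Colour | white | blue | orange | purple
deriving DecidableEq

open Classical in
/-- The colour of `u` at time `l`. -/
noncomputable def colourAt (G : SimpleGraph V) (S : V → Set ℕ) (l : ℕ) (u : V) : Colour :=
  if RelevantLe G S l u then Colour.purple
  else if ∀ v, G.Adj u v → ¬ RelevantLe G S l v then Colour.white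
  else if ∃! v, G.Adj u v ∧ RelevantLe G S l v then Colour.blue
  else Colour.orange

/-- The set `W_l` of white vertices at time `l`. -/
def White (G : SimpleGraph V) (S : V → Set ℕ) (l : ℕ) : Set V :=
  {u | ¬ RelevantLe G S l u ∧ ∀ v, G.Adj u v → ¬ RelevantLe G S l v}

/-- The set `B_l` of blue vertices at time `l`. -/
def Blue (G : SimpleGraph V) (S : V → Set ℕ) (l : ℕ) : Set V :=
  {u | ¬ RelevantLe G S l u ∧ ∃! v, G.Adj u v ∧ RelevantLe G S l v}
/-- The label assignment determined by a sample point `ω`. -/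
def labels (ω : V → ℕ → Bool) : V → Set ℕ := fun v => {i | ω v i = true}

/-- `μ` is the random label assignment with probabilities `(p₀, p)`: the events
`i ∈ S(v)` are mutually independent, and each has probability `p₀` if `i = 0`
and `p` if `i ≥ 1`. -/
def IsLabelMeasure (μ : Measure (V → ℕ → Bool)) (p₀ p : ℝ) : Prop :=
  IsProbabilityMeasure μ ∧
  iIndepSet (fun q : V × ℕ => {ω : V → ℕ → Bool | ω q.1 q.2 = true}) μ ∧
  ∀ (v : V) (i : ℕ), μ {ω | ω v i = true} = ENNReal.ofReal (if i = 0 then p₀ else p)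

/-- Event that `u` is white at time `l`. -/
def WEv (G : SimpleGraph V) (l : ℕ) (u : V) : Set (V → ℕ → Bool) :=
  {ω | u ∈ White G (labels ω) l}

/-- Event that `u` is blue at time `l`. -/
def BEv (G : SimpleGraph V) (l : ℕ) (u : V) : Set (V → ℕ → Bool) :=
  {ω | u ∈ Blue G (labels ω) l}

/-- Event that `u` has relevant label `i`, i.e. `u ∈ R_i`. -/
def REv (G : SimpleGraph V) (i : ℕ) (u : V) : Set (V → ℕ → Bool) :=
  {ω | Relevant G (labels ω) i u}

/-- Event that `u` has a relevant label `≤ l`, i.e. `u ∈ R_{≤ l}`. -/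
def RLeEv (G : SimpleGraph V) (l : ℕ) (u : V) : Set (V → ℕ → Bool) :=
  {ω | RelevantLe G (labels ω) l u}

/-- `G` is `r`-regular. -/
def IsRegular (G : SimpleGraph V) (r : ℕ) : Prop :=
  ∀ v : V, (G.neighborSet v).ncard = r

/-- The component containing `w` of the subgraph of `G` induced on
`{x | dist(u,x) ≤ 2} \ {u}` (for `w` a neighbour of `u`, this is the branch `T_w²`). -/
def Branch (G : SimpleGraph V) (u w : V) : Set V :=
  {x | ∃ pw : G.Walk w x, ∀ y ∈ pw.support, y ≠ u ∧ G.dist u y ≤ 2}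

/-!
Both conditionings say that `u` is not in `R_{≤ i}` and that its neighbours in `R_{≤ i}` are
exactly those in a set `t` (empty, resp. `{v l}`). On this event the edges from `u` to its
neighbours outside `t` influence no label, so removing them changes neither the relevant labels
nor the colours up to time `i`. In the pruned graph the event is an intersection of events
`D x`, one for each root `x`, a root being `u` or a neighbour of `u` outside `t`, and both `D x`
and the colouring of the branch at `x` depend only on the labels within distance `i + 2` of `x`.
A path between two roots in the pruned graph closes up through `u` to a cycle of `G` with at most
two additional edges, so by the girth bound these neighbourhoods are disjoint and the σ-algebras
of their labels are independent. They stay independent after conditioning on `⋂ x, D x`, since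
`D x` belongs to the σ-algebra at `x`.
-/

section Measurability

variable {Ω α : Type*} {m : MeasurableSpace Ω}

theorem measurable_prop_and_of_imp {c : Prop} {p : Ω → Prop} (hp : c → Measurable p) :
    Measurable fun ω ↦ c ∧ p ω := by
  by_cases hc : c
  · simpa only [hc, true_and] using hp hc
  · simp only [hc, false_and, measurable_const]

theorem measurable_existsUnique [Countable α] {p : α → Ω → Prop} (hp : ∀ a, Measurable (p a)) :
    Measurable fun ω ↦ ∃! a, p a ω :=
  .exists fun a ↦ (hp a).and (.forall fun b ↦ (hp b).imp measurable_const)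

theorem measurable_mem_prodMk {A B : Set Ω} (hA : MeasurableSet A) (hB : MeasurableSet B) :
    Measurable fun ω ↦ (ω ∈ A, ω ∈ B) :=
  (measurableSet_setOfPred.1 hA).prodMk (measurableSet_setOfPred.1 hB)

end Measurability

section Independence

variable {Ω ι κ : Type*} {mΩ : MeasurableSpace Ω} {μ : Measure Ω}

theorem iIndep_biSup_of_pairwise_disjoint {m : ι → MeasurableSpace Ω} (hm : ∀ i, m i ≤ mΩ)
    (h : iIndep m μ) {S : κ → Set ι} (hS : Pairwise (Function.onFun Disjoint S)) :
    iIndep (fun k ↦ ⨆ i ∈ S k, m i) μ := by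
  classical
  have := h.isProbabilityMeasure
  refine (iIndep_iff _ _).2 fun s f ↦ ?_
  induction s using Finset.induction_on with
  | empty => simp
  | insert k s hk ih =>
    intro hf
    have hf' : ∀ j ∈ s, MeasurableSet[⨆ i ∈ S j, m i] (f j) :=
      fun j hj ↦ hf j (Finset.mem_insert_of_mem hj)
    have hrest : MeasurableSet[⨆ i ∈ ⋃ j ∈ s, S j, m i] (⋂ j ∈ s, f j) := by
      refine .biInter s.countable_toSet fun j hj ↦ ?_
      have hle : (⨆ i ∈ S j, m i) ≤ ⨆ i ∈ ⋃ j ∈ s, S j, m i :=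
        biSup_mono fun i hi ↦ mem_biUnion hj hi
      exact hle _ (hf' j hj)
    have hdisj : Disjoint (S k) (⋃ j ∈ s, S j) :=
      disjoint_iUnion₂_right.2 fun j hj ↦ hS (ne_of_mem_of_not_mem hj hk).symm
    rw [Finset.set_biInter_insert, Finset.prod_insert hk, ← ih hf']
    exact Indep_iff _ _ _ |>.1 (indep_iSup_of_disjoint hm h hdisj) _ _
      (hf k (Finset.mem_insert_self k s)) hrest

theorem iIndep_cond_iInter [Finite κ] {m : κ → MeasurableSpace Ω} (hm : ∀ k, m k ≤ mΩ)
    (h : iIndep m μ) {D : κ → Set Ω} (hD : ∀ k, MeasurableSet[m k] (D k))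
    (hpos : μ (⋂ k, D k) ≠ 0) :
    iIndep m μ[|⋂ k, D k] := by
  classical
  refine (iIndep_iff _ _).2 fun s f hf ↦ ?_
  let F (k : κ) : Set Ω := if k ∈ s then f k else univ
  have hF (k) : MeasurableSet[m k] (F k) := by
    by_cases hk : k ∈ s
    · simpa only [F, hk, if_true] using hf k hk
    · simpa only [F, hk, if_false] using @MeasurableSet.univ _ (m k)
  have hFD : iIndepFun (fun k ω ↦ (ω ∈ F k, ω ∈ D k)) μ :=
    iIndep_of_iIndep_of_le h fun k ↦ (measurable_mem_prodMk (hF k) (hD k)).comap_le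
  have hpre (A : Set Ω) : (· ∈ A) ⁻¹' {True} = A := by ext; simp
  have hcond : iIndepFun (fun k ω ↦ ω ∈ F k) μ[|⋂ k, D k] := by
    rw [← iInter_congr fun k ↦ hpre (D k)]
    exact hFD.cond (t := fun _ ↦ {True})
      (fun k ↦ measurableSet_setOfPred.1 (hm k _ (hD k)))
      (fun k hk ↦ hpos (measure_mono_null (iInter_subset _ k) (hpre (D k) ▸ hk)))
      fun _ ↦ .of_discrete
  have hprod := hcond.measure_inter_preimage_eq_mul s (sets := fun _ ↦ {True})
    fun _ _ ↦ .of_discrete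
  have hFs (k) (hk : k ∈ s) : F k = f k := if_pos hk
  simp only [hpre] at hprod
  rwa [iInter₂_congr hFs, Finset.prod_congr rfl fun k hk ↦ by rw [hFs k hk]] at hprod

end Independence

section Girth

variable {G H : SimpleGraph V} {a b u : V}

theorem egirth_le_edist_add_one (hle : H ≤ G) (hG : G.Adj a b) (hH : ¬ H.Adj a b) :
    G.egirth ≤ H.edist a b + 1 := by
  classical
  by_cases hr : H.Reachable a b
  · obtain ⟨p, hlen⟩ := hr.exists_walk_length_eq_edist
    have hcycle : (SimpleGraph.Walk.cons hG.symm (p.bypass.mapLe hle)).IsCycle := by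
      refine (SimpleGraph.Walk.cons_isCycle_iff _ _).2 ⟨p.bypass_isPath.mapLe hle, fun he ↦ ?_⟩
      rw [SimpleGraph.Walk.edges_mapLe_eq_edges] at he
      exact hH (p.bypass.adj_of_mem_edges he).symm
    calc G.egirth ≤ _ := SimpleGraph.egirth_le_length hcycle
      _ = p.bypass.length + 1 := by simp
      _ ≤ H.edist a b + 1 := by rw [← hlen]; gcongr; exact p.length_bypass_le_length
  · simp [SimpleGraph.edist_eq_top_of_not_reachable hr]

theorem egirth_le_edist_add_two (hle : H ≤ G) (ha : G.Adj u a) (hb : G.Adj u b) (hab : a ≠ b)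
    (hH : ¬ H.Adj u a) : G.egirth ≤ H.edist a b + 2 := by
  let H' := H ⊔ SimpleGraph.edge b u
  have hle' : H' ≤ G := sup_le hle ((SimpleGraph.edge_le_iff _).2 (.inr hb.symm))
  have hH' : ¬ H'.Adj a u := by
    simp [H', SimpleGraph.edge_adj, hab, ha.ne', H.adj_comm a u, hH]
  have hbu : H'.edist b u = 1 :=
    SimpleGraph.edist_eq_one_iff_adj.2
      (.inr ((SimpleGraph.edge_adj ..).2 ⟨.inl ⟨rfl, rfl⟩, hb.ne'⟩))
  calc G.egirth ≤ H'.edist a u + 1 := egirth_le_edist_add_one hle' ha.symm hH'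
    _ ≤ H'.edist a b + H'.edist b u + 1 := by gcongr; exact SimpleGraph.edist_triangle
    _ ≤ H.edist a b + 1 + 1 := by
        rw [hbu]; gcongr; exact le_sup_left
    _ = H.edist a b + 2 := by rw [add_assoc, one_add_one_eq_two]

theorem exists_adj_edist_deleteIncidenceSet_le_one (hr : G.Reachable u a) (ha : a ≠ u)
    (hd : G.dist u a ≤ 2) : ∃ c, G.Adj u c ∧ (G.deleteIncidenceSet u).edist c a ≤ 1 := by
  obtain ⟨p, hp⟩ := hr.exists_walk_length_eq_dist
  rw [← hp] at hd
  match p, hd with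
  | .nil, _ => exact absurd rfl ha
  | .cons h .nil, _ => exact ⟨a, h, by simp⟩
  | .cons (v := c) h (.cons h' .nil), _ =>
    refine ⟨c, h, SimpleGraph.edist_le_one_iff_adj_or_eq.2 (.inl ?_)⟩
    exact SimpleGraph.deleteIncidenceSet_adj.2 ⟨h', h.ne', ha⟩
  | .cons _ (.cons _ (.cons _ _)), hd => simp at hd

/-- The subgraph of `G` in which `u` keeps only its edges to `t`. -/
def prune (G : SimpleGraph V) (u : V) (t : Set V) : SimpleGraph V :=
  G.deleteEdges ((s(u, ·)) '' tᶜ)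

theorem prune_adj {t : Set V} {x y : V} :
    (prune G u t).Adj x y ↔ G.Adj x y ∧ (x = u → y ∈ t) ∧ (y = u → x ∈ t) := by
  simp only [prune, SimpleGraph.deleteEdges_adj, mem_image, mem_compl_iff, Sym2.eq_iff]
  grind

theorem prune_le (G : SimpleGraph V) (u : V) (t : Set V) : prune G u t ≤ G :=
  G.deleteEdges_le _

theorem deleteIncidenceSet_le_prune (G : SimpleGraph V) (u : V) (t : Set V) :
    G.deleteIncidenceSet u ≤ prune G u t := fun x y h ↦ by
  obtain ⟨hxy, hx, hy⟩ := SimpleGraph.deleteIncidenceSet_adj.1 h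
  exact prune_adj.2 ⟨hxy, fun h ↦ absurd h hx, fun h ↦ absurd h hy⟩

theorem egirth_le_edist_prune_add_two {t : Set V} {x y : V}
    (hx : x ∈ insert u (G.neighborSet u \ t)) (hy : y ∈ insert u (G.neighborSet u \ t))
    (hxy : x ≠ y) : G.egirth ≤ (prune G u t).edist x y + 2 := by
  have hcut {z : V} (hz : z ∉ t) : ¬ (prune G u t).Adj u z := fun h ↦ hz ((prune_adj.1 h).2.1 rfl)
  have hend {z : V} (hz : G.Adj u z) (hzt : z ∉ t) :
      G.egirth ≤ (prune G u t).edist u z + 2 :=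
    (egirth_le_edist_add_one (prune_le G u t) hz (hcut hzt)).trans
      (by gcongr; exact one_le_two)
  obtain rfl | ⟨hx, hxt⟩ := hx <;> obtain rfl | ⟨hy, hyt⟩ := hy
  · exact absurd rfl hxy
  · exact hend hy hyt
  · exact SimpleGraph.edist_comm ▸ hend hx hxt
  · exact egirth_le_edist_add_two (prune_le G u t) hx hy hxy (hcut hxt)

theorem edist_deleteIncidenceSet_le_one_of_adj (hg : 5 < G.egirth) {w x y : V} (hw : G.Adj u w)
    (hx : (G.deleteIncidenceSet u).edist w x ≤ 1) (hxu : x ≠ u) (hxy : G.Adj x y) (hyu : y ≠ u)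
    (hdy : G.dist u y ≤ 2) : (G.deleteIncidenceSet u).edist w y ≤ 1 := by
  set H := G.deleteIncidenceSet u
  have hle : H ≤ G := G.deleteIncidenceSet_le u
  have hHxy : H.edist x y = 1 := SimpleGraph.edist_eq_one_iff_adj.2
    (SimpleGraph.deleteIncidenceSet_adj.2 ⟨hxy, hxu, hyu⟩)
  have hwy : H.edist w y ≤ 2 := by
    calc H.edist w y ≤ H.edist w x + H.edist x y := SimpleGraph.edist_triangle
      _ ≤ 1 + 1 := by gcongr; exact hHxy.le
      _ = 2 := one_add_one_eq_two
  have hreach : H.Reachable w y :=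
    SimpleGraph.reachable_of_edist_ne_top (ne_top_of_le_ne_top (by decide) hwy)
  obtain ⟨c, hc, hcy⟩ :=
    exists_adj_edist_deleteIncidenceSet_le_one (hw.reachable.trans (hreach.mono hle)) hyu hdy
  by_cases hwc : w = c
  · exact hwc ▸ hcy
  have hHw : ¬ H.Adj u w := fun h ↦ (SimpleGraph.deleteIncidenceSet_adj.1 h).2.1 rfl
  refine absurd hg (not_lt.2 ?_)
  calc G.egirth ≤ H.edist w c + 2 := egirth_le_edist_add_two hle hw hc hwc hHw
    _ ≤ H.edist w y + H.edist y c + 2 := by gcongr; exact SimpleGraph.edist_triangle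
    _ ≤ 2 + 1 + 2 := by gcongr; exact SimpleGraph.edist_comm ▸ hcy
    _ = 5 := rfl

theorem edist_deleteIncidenceSet_le_one_of_mem_branch (hg : 5 < G.egirth) {w x : V}
    (hw : G.Adj u w) (hx : x ∈ Branch G u w) : (G.deleteIncidenceSet u).edist w x ≤ 1 := by
  obtain ⟨p, hp⟩ := hx
  suffices ∀ {y} (q : G.Walk y x), (∀ z ∈ q.support, z ≠ u ∧ G.dist u z ≤ 2) →
      (G.deleteIncidenceSet u).edist w y ≤ 1 → (G.deleteIncidenceSet u).edist w x ≤ 1 from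
    this p hp (by simp)
  clear p hp
  intro y q hq hy
  induction q with
  | nil => exact hy
  | @cons y z _ hyz q ih =>
    obtain ⟨hyu, -⟩ := hq y (by simp)
    obtain ⟨hzu, hdz⟩ := hq z (by simp)
    exact ih (fun z hz ↦ hq z (by simp [hz]))
      (edist_deleteIncidenceSet_le_one_of_adj hg hw hy hyu hyz hzu hdz)

end Girth

section Relevance

variable {G H : SimpleGraph V} {S : V → Set ℕ} {n : ℕ} {u x : V} {t : Set V}

theorem relevant_iff (G : SimpleGraph V) (S : V → Set ℕ) (i : ℕ) (x : V) :
    Relevant G S i x ↔ (i = 0 ∧ 0 ∈ S x) ∨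
      (i ∈ S x ∧ (∀ j < i, ¬ Relevant G S j x) ∧
        ∃! y, G.Adj x y ∧ ∃ j < i, Relevant G S j y) := by
  conv_lhs => unfold Relevant
  rw [Nat.strongRecOn_eq]
  simp only [exists_prop]
  rfl

theorem relevantLe_of_zero_mem (G : SimpleGraph V) (n : ℕ) (h : 0 ∈ S x) : RelevantLe G S n x :=
  ⟨0, n.zero_le, (relevant_iff ..).2 (.inl ⟨rfl, h⟩)⟩

theorem not_relevantLe_of_forall_notMem (G : SimpleGraph V) (h : ∀ i ≤ n, i ∉ S x) :
    ¬ RelevantLe G S n x := by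
  rintro ⟨i, hi, hr⟩
  obtain ⟨rfl, h0⟩ | ⟨hmem, -⟩ := (relevant_iff ..).1 hr
  exacts [h 0 hi h0, h i hi hmem]

theorem relevant_congr (h : ∀ x y, RelevantLe G S n y → (G.Adj x y ↔ H.Adj x y)) {i : ℕ}
    (hi : i ≤ n) (x : V) : Relevant G S i x ↔ Relevant H S i x := by
  induction i using Nat.strong_induction_on generalizing x with
  | _ i ih =>
    have hlower (j) (hj : j < i) (y) : Relevant G S j y ↔ Relevant H S j y :=
      ih j hj (hj.le.trans hi) y
    have hnbr (y) : (G.Adj x y ∧ ∃ j < i, Relevant G S j y) ↔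
        (H.Adj x y ∧ ∃ j < i, Relevant H S j y) := by
      rw [← exists_congr fun j ↦ and_congr_right fun hj ↦ hlower j hj y]
      exact and_congr_left fun ⟨j, hj, hr⟩ ↦ h x y ⟨j, hj.le.trans hi, hr⟩
    rw [relevant_iff, relevant_iff H, existsUnique_congr hnbr,
      forall₂_congr fun j hj ↦ not_congr (hlower j hj x)]

theorem relevantLe_congr (h : ∀ x y, RelevantLe G S n y → (G.Adj x y ↔ H.Adj x y)) (x : V) :
    RelevantLe G S n x ↔ RelevantLe H S n x :=
  exists_congr fun _ ↦ and_congr_right fun hi ↦ relevant_congr h hi x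

theorem colourAt_congr (h : ∀ x y, RelevantLe G S n y → (G.Adj x y ↔ H.Adj x y)) (x : V) :
    colourAt G S n x = colourAt H S n x := by
  have hnbr (y) : (G.Adj x y ∧ RelevantLe G S n y) ↔ (H.Adj x y ∧ RelevantLe H S n y) := by
    rw [← relevantLe_congr h]
    exact and_congr_left (h x y)
  have hnone : (∀ y, G.Adj x y → ¬ RelevantLe G S n y) ↔
      ∀ y, H.Adj x y → ¬ RelevantLe H S n y := by
    simpa only [not_and] using forall_congr' fun y ↦ not_congr (hnbr y)
  classical
  unfold colourAt
  exact if_congr (relevantLe_congr h x) rfl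
    (if_congr hnone rfl (if_congr (existsUnique_congr hnbr) rfl rfl))

theorem prune_adj_congr {P : V → Prop} (hu : ¬ P u) (ht : ∀ y ∈ G.neighborSet u \ t, ¬ P y)
    (x y : V) (hy : P y) : G.Adj x y ↔ (prune G u t).Adj x y := by
  rw [prune_adj, iff_self_and]
  rintro hxy
  refine ⟨?_, fun h ↦ absurd (h ▸ hy) hu⟩
  rintro rfl
  by_contra hyt
  exact ht y ⟨hxy, hyt⟩ hy

/-- The event that `u` is not in `R_{≤ l}` and that its neighbours in `R_{≤ l}` are exactly
those in `t`; both conditionings of the theorem are of this form. -/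
def relevantNbrsEv (G : SimpleGraph V) (l : ℕ) (u : V) (t : Set V) : Set (V → ℕ → Bool) :=
  {ω | ¬ RelevantLe G (labels ω) l u ∧ ∀ y, G.Adj u y → (RelevantLe G (labels ω) l y ↔ y ∈ t)}

theorem WEv_eq_relevantNbrsEv (G : SimpleGraph V) (l : ℕ) (u : V) :
    WEv G l u = relevantNbrsEv G l u ∅ := by
  simp only [WEv, White, relevantNbrsEv, mem_ofPred_eq, mem_empty_iff_false, iff_false]

theorem BEv_inter_RLeEv_eq_relevantNbrsEv {y : V} (hy : G.Adj u y) (l : ℕ) :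
    BEv G l u ∩ RLeEv G l y = relevantNbrsEv G l u {y} := by
  ext ω
  simp only [BEv, Blue, RLeEv, relevantNbrsEv, mem_inter_iff, mem_ofPred_eq, mem_singleton_iff]
  constructor
  · rintro ⟨⟨hu, hex⟩, hry⟩
    exact ⟨hu, fun z hz ↦ ⟨fun hrz ↦ hex.unique ⟨hz, hrz⟩ ⟨hy, hry⟩, fun h ↦ h ▸ hry⟩⟩
  · rintro ⟨hu, h⟩
    have hry := (h y hy).2 rfl
    exact ⟨⟨hu, y, ⟨hy, hry⟩, fun z hz ↦ (h z hz.1).1 hz.2⟩, hry⟩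

theorem adj_congr_of_mem_relevantNbrsEv {ω : V → ℕ → Bool} (hω : ω ∈ relevantNbrsEv G n u t)
    (x y : V) (hy : RelevantLe G (labels ω) n y) : G.Adj x y ↔ (prune G u t).Adj x y :=
  prune_adj_congr hω.1 (fun y hy ↦ (hω.2 y hy.1).not.2 hy.2) x y hy

/-- The part of `relevantNbrsEv` decided near `x` in the pruned graph, for `x` equal to `u` or to
a neighbour of `u` outside `t`. -/
def rootEv (G : SimpleGraph V) (l : ℕ) (u : V) (t : Set V) (x : V) : Set (V → ℕ → Bool) :=
  {ω | ¬ RelevantLe (prune G u t) (labels ω) l x ∧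
    (x = u → ∀ y ∈ t, G.Adj u y → RelevantLe (prune G u t) (labels ω) l y)}

theorem relevantNbrsEv_eq_iInter_rootEv (G : SimpleGraph V) (l : ℕ) (u : V) (t : Set V) :
    relevantNbrsEv G l u t =
      ⋂ x : ↥(insert u (G.neighborSet u \ t)), rootEv G l u t x := by
  ext ω
  rw [mem_iInter]
  constructor
  · intro hω
    have hrel := relevantLe_congr (adj_congr_of_mem_relevantNbrsEv hω)
    rintro ⟨x, rfl | ⟨hx, hxt⟩⟩
    · exact ⟨(hrel x).not.1 hω.1, fun _ y hyt hy ↦ (hrel y).1 ((hω.2 y hy).2 hyt)⟩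
    · exact ⟨(hrel x).not.1 ((hω.2 x hx).not.2 hxt), fun h ↦ absurd h (G.ne_of_adj hx).symm⟩
  · intro hω
    obtain ⟨hu, ht⟩ := hω ⟨u, mem_insert ..⟩
    have hout (y) (hy : y ∈ G.neighborSet u \ t) := (hω ⟨y, mem_insert_of_mem _ hy⟩).1
    have hrel := relevantLe_congr fun x y hy ↦ (prune_adj_congr hu hout x y hy).symm
    refine ⟨(hrel u).not.1 hu, fun y hy ↦ ⟨fun hry ↦ ?_, fun hyt ↦ (hrel y).1 (ht rfl y hyt hy)⟩⟩
    by_contra hyt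
    exact hout y ⟨hy, hyt⟩ ((hrel y).2 hry)

end Relevance

section Locality

variable {Ω : Type*} {H : SimpleGraph V} {x : V}

instance : MeasurableSpace Colour := ⊤

theorem edist_le_add_one_of_adj {y z : V} {n : ℕ∞} (hxy : H.Adj x y) (hyz : H.edist y z ≤ n) :
    H.edist x z ≤ n + 1 := by
  rw [add_comm, ← SimpleGraph.edist_eq_one_iff_adj.2 hxy]
  exact SimpleGraph.edist_triangle.trans (by gcongr)

theorem measurable_relevant [Countable V] {m : MeasurableSpace Ω} {S : Ω → V → Set ℕ} {i : ℕ}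
    (hS : ∀ y, H.edist x y ≤ i → ∀ j, Measurable fun ω ↦ j ∈ S ω y) :
    Measurable fun ω ↦ Relevant H (S ω) i x := by
  induction i using Nat.strong_induction_on generalizing x with
  | _ i ih =>
    have hself (j) : Measurable fun ω ↦ j ∈ S ω x := hS x (by simp) j
    have hlower (j) (hj : j < i) : Measurable fun ω ↦ Relevant H (S ω) j x :=
      ih j hj fun y hy ↦ hS y (hy.trans (by exact_mod_cast hj.le))
    have hnbr (y) (hxy : H.Adj x y) (j) (hj : j < i) :
        Measurable fun ω ↦ Relevant H (S ω) j y :=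
      ih j hj fun z hyz ↦ hS z ((edist_le_add_one_of_adj hxy hyz).trans (by exact_mod_cast hj))
    simp_rw [relevant_iff H _ i x]
    exact .or (measurable_prop_and_of_imp fun _ ↦ hself 0) <| (hself i).and <| .and
      (.forall fun j ↦ .forall fun hj ↦ (hlower j hj).not)
      (measurable_existsUnique fun y ↦ measurable_prop_and_of_imp fun hxy ↦
        .exists fun j ↦ measurable_prop_and_of_imp (hnbr y hxy j))

theorem measurable_relevantLe [Countable V] {m : MeasurableSpace Ω} {S : Ω → V → Set ℕ} {n : ℕ}
    (hS : ∀ y, H.edist x y ≤ n → ∀ j, Measurable fun ω ↦ j ∈ S ω y) :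
    Measurable fun ω ↦ RelevantLe H (S ω) n x :=
  .exists fun i ↦ measurable_prop_and_of_imp fun hi ↦ measurable_relevant fun y hy ↦
    hS y (hy.trans (by exact_mod_cast hi))

theorem measurable_colourAt [Countable V] {m : MeasurableSpace Ω} {S : Ω → V → Set ℕ} {n : ℕ}
    (hS : ∀ y, H.edist x y ≤ n + 1 → ∀ j, Measurable fun ω ↦ j ∈ S ω y) :
    Measurable fun ω ↦ colourAt H (S ω) n x := by
  have hself : Measurable fun ω ↦ RelevantLe H (S ω) n x :=
    measurable_relevantLe fun y hy ↦ hS y (hy.trans le_self_add)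
  have hnbr (y) (hxy : H.Adj x y) : Measurable fun ω ↦ RelevantLe H (S ω) n y :=
    measurable_relevantLe fun z hz ↦ hS z (edist_le_add_one_of_adj hxy hz)
  have hnone : Measurable fun ω ↦ ∀ y, H.Adj x y → ¬ RelevantLe H (S ω) n y :=
    .forall fun y ↦ .forall fun hxy ↦ (hnbr y hxy).not
  have hunique : Measurable fun ω ↦ ∃! y, H.Adj x y ∧ RelevantLe H (S ω) n y :=
    measurable_existsUnique fun y ↦ measurable_prop_and_of_imp (hnbr y)
  exact .ite (measurableSet_setOfPred.2 hself) measurable_const <|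
    .ite (measurableSet_setOfPred.2 hnone) measurable_const <|
    .ite (measurableSet_setOfPred.2 hunique) measurable_const measurable_const

theorem measurableSet_rootEv [Countable V] {m : MeasurableSpace (V → ℕ → Bool)}
    {G : SimpleGraph V} {l : ℕ} {u : V} {t : Set V}
    (hm : ∀ y, (prune G u t).edist x y ≤ l + 1 → ∀ j, Measurable fun ω ↦ j ∈ labels ω y) :
    MeasurableSet (rootEv G l u t x) := by
  have hself : Measurable fun ω ↦ RelevantLe (prune G u t) (labels ω) l x :=
    measurable_relevantLe fun y hy ↦ hm y (hy.trans le_self_add)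
  refine measurableSet_setOfPred.2 <| hself.not.and <|
    .forall fun hxu ↦ .forall fun y ↦ .forall fun hyt ↦ .forall fun huy ↦ ?_
  subst hxu
  have hxy : (prune G x t).Adj x y :=
    prune_adj.2 ⟨huy, fun _ ↦ hyt, fun h ↦ absurd h huy.ne'⟩
  exact measurable_relevantLe fun z hz ↦ hm z (edist_le_add_one_of_adj hxy hz)

theorem measurableSet_label (q : V × ℕ) :
    MeasurableSet {ω : V → ℕ → Bool | ω q.1 q.2 = true} := by
  have hq : Measurable fun ω : V → ℕ → Bool ↦ ω q.1 q.2 := by fun_prop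
  exact hq (measurableSet_singleton true)

theorem generateFrom_label_le_pi (q : V × ℕ) :
    MeasurableSpace.generateFrom {{ω : V → ℕ → Bool | ω q.1 q.2 = true}} ≤ MeasurableSpace.pi :=
  MeasurableSpace.generateFrom_le fun _ h ↦ h ▸ measurableSet_label q

/-- The σ-algebra generated by the labels of the vertices within distance `n` of `x` in `H`. -/
abbrev labelsNear (H : SimpleGraph V) (x : V) (n : ℕ∞) : MeasurableSpace (V → ℕ → Bool) :=
  ⨆ q ∈ {q : V × ℕ | H.edist x q.1 ≤ n},
    MeasurableSpace.generateFrom {{ω : V → ℕ → Bool | ω q.1 q.2 = true}}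

theorem labelsNear_le_pi (H : SimpleGraph V) (x : V) (n : ℕ∞) :
    labelsNear H x n ≤ MeasurableSpace.pi :=
  iSup₂_le fun q _ ↦ generateFrom_label_le_pi q

theorem measurable_mem_labels {y : V} {n : ℕ∞} (hy : H.edist x y ≤ n) (j : ℕ) :
    Measurable[labelsNear H x n] fun ω ↦ j ∈ labels ω y := by
  refine (@measurableSet_setOfPred _ (labelsNear H x n) _).1 ?_
  have hle : MeasurableSpace.generateFrom {{ω : V → ℕ → Bool | ω y j = true}} ≤ labelsNear H x n :=
    le_iSup₂_of_le (y, j) hy le_rfl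
  exact hle _ (MeasurableSpace.measurableSet_generateFrom rfl)

theorem iIndep_labelsNear {μ : Measure (V → ℕ → Bool)}
    (hμ : iIndepSet (fun q : V × ℕ ↦ {ω : V → ℕ → Bool | ω q.1 q.2 = true}) μ) {n : ℕ∞} {A : Set V}
    (hA : ∀ x ∈ A, ∀ y ∈ A, x ≠ y → 2 * n < H.edist x y) :
    iIndep (fun x : A ↦ labelsNear H x n) μ := by
  refine iIndep_biSup_of_pairwise_disjoint generateFrom_label_le_pi
    ((iIndepSet_iff_iIndep _ _).1 hμ) fun x y hxy ↦ disjoint_left.2 fun q hx hy ↦ ?_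
  refine (hA x x.2 y y.2 (Subtype.coe_injective.ne hxy)).not_ge ?_
  calc H.edist x y ≤ H.edist x q.1 + H.edist q.1 y := SimpleGraph.edist_triangle
    _ ≤ n + n := add_le_add hx (SimpleGraph.edist_comm ▸ hy)
    _ = 2 * n := (two_mul n).symm

theorem measurable_branchColouring_prune [Countable V] {G : SimpleGraph V} (hg : 5 < G.egirth)
    {u w : V} (hw : G.Adj u w) (t : Set V) (i : ℕ) :
    Measurable[labelsNear (prune G u t) w (i + 2)]
      fun ω (x : Branch G u w) ↦ colourAt (prune G u t) (labels ω) i x := by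
  refine (@measurable_pi_iff _ _ _ (labelsNear _ w _) _ _).2 fun x ↦
    measurable_colourAt fun y hy ↦ measurable_mem_labels ?_
  have hwx : (prune G u t).edist w x ≤ 1 :=
    (SimpleGraph.edist_anti (deleteIncidenceSet_le_prune G u t)).trans
      (edist_deleteIncidenceSet_le_one_of_mem_branch hg hw x.2)
  calc (prune G u t).edist w y
      ≤ (prune G u t).edist w x + (prune G u t).edist x y := SimpleGraph.edist_triangle
    _ ≤ 1 + (i + 1) := add_le_add hwx hy
    _ = i + 2 := by ring

end Locality

section Conditioning

variable {G : SimpleGraph V} {μ : Measure (V → ℕ → Bool)} {p₀ p : ℝ} {u : V}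

theorem measure_label_eq_ne_zero (hμ : IsLabelMeasure μ p₀ p) (hp₀ : p₀ ∈ Ioo (0 : ℝ) 1)
    (hp : p ∈ Ioo (0 : ℝ) 1) (q : V × ℕ) (b : Bool) : μ {ω | ω q.1 q.2 = b} ≠ 0 := by
  have := hμ.1
  have hq : (if q.2 = 0 then p₀ else p) ∈ Ioo (0 : ℝ) 1 := by split_ifs <;> assumption
  have htrue := hμ.2.2 q.1 q.2
  cases b with
  | true => exact htrue ▸ (ENNReal.ofReal_pos.2 hq.1).ne'
  | false =>
    have hcompl : {ω : V → ℕ → Bool | ω q.1 q.2 = false} = {ω | ω q.1 q.2 = true}ᶜ := by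
      ext; simp
    rw [hcompl, prob_compl_eq_one_sub (measurableSet_label q), htrue]
    exact (tsub_pos_of_lt (ENNReal.ofReal_lt_one.2 hq.2)).ne'

theorem measure_forall_label_eq_ne_zero (hμ : IsLabelMeasure μ p₀ p) (hp₀ : p₀ ∈ Ioo (0 : ℝ) 1)
    (hp : p ∈ Ioo (0 : ℝ) 1) (F : Finset (V × ℕ)) (a : V × ℕ → Bool) :
    μ {ω | ∀ q ∈ F, ω q.1 q.2 = a q} ≠ 0 := by
  have hmeas (q : V × ℕ) : MeasurableSet[MeasurableSpace.generateFrom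
      {{ω : V → ℕ → Bool | ω q.1 q.2 = true}}] {ω | ω q.1 q.2 = a q} := by
    have htrue := MeasurableSpace.measurableSet_generateFrom
      (mem_singleton {ω : V → ℕ → Bool | ω q.1 q.2 = true})
    cases ha : a q with
    | true => exact htrue
    | false => simpa only [compl_ofPred, Bool.not_eq_true] using htrue.compl
  have hprod := ((iIndepSet_iff_iIndep _ _).1 hμ.2.1).meas_biInter (S := F) fun q _ ↦ hmeas q
  simp only [ofPred_forall]
  rw [hprod]
  exact Finset.prod_ne_zero_iff.2 fun q _ ↦ measure_label_eq_ne_zero hμ hp₀ hp q (a q)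

theorem measure_relevantNbrsEv_ne_zero (hμ : IsLabelMeasure μ p₀ p) (hp₀ : p₀ ∈ Ioo (0 : ℝ) 1)
    (hp : p ∈ Ioo (0 : ℝ) 1) (hfin : (G.neighborSet u).Finite) (l : ℕ) (t : Set V) :
    μ (relevantNbrsEv G l u t) ≠ 0 := by
  classical
  let F : Finset (V × ℕ) := insert u hfin.toFinset ×ˢ Finset.range (l + 1)
  let a (q : V × ℕ) : Bool := decide (G.Adj u q.1 ∧ q.1 ∈ t ∧ q.2 = 0)
  refine fun h ↦ measure_forall_label_eq_ne_zero hμ hp₀ hp F a (measure_mono_null ?_ h)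
  intro ω hω
  have hlabel {y : V} (hy : y = u ∨ G.Adj u y) {j : ℕ} (hj : j ≤ l) :
      j ∈ labels ω y ↔ G.Adj u y ∧ y ∈ t ∧ j = 0 := by
    have := hω (y, j) (by simpa [F, Nat.lt_succ_iff, hj] using hy)
    simp [labels, this, a]
  refine ⟨not_relevantLe_of_forall_notMem G fun j hj h ↦ ?_, fun y hy ↦ ⟨fun hr ↦ ?_, fun hyt ↦ ?_⟩⟩
  · exact G.irrefl ((hlabel (.inl rfl) hj).1 h).1
  · by_contra hyt
    exact not_relevantLe_of_forall_notMem G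
      (fun j hj h ↦ hyt ((hlabel (.inr hy) hj).1 h).2.1) hr
  · exact relevantLe_of_zero_mem G l ((hlabel (.inr hy) l.zero_le).2 ⟨hy, hyt, rfl⟩)

/-- The colouring at time `i` of the branch at `u` containing `w`. -/
noncomputable def branchColouring (G : SimpleGraph V) (u w : V) (i : ℕ) (ω : V → ℕ → Bool) :
    Branch G u w → Colour :=
  fun x ↦ colourAt G (labels ω) i x

theorem iIndepFun_branchColouring_cond [Countable V]
    (hμ : IsLabelMeasure μ p₀ p) (hp₀ : p₀ ∈ Ioo (0 : ℝ) 1) (hp : p ∈ Ioo (0 : ℝ) 1)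
    (hfin : (G.neighborSet u).Finite) {i : ℕ} (hg : 2 * i + 6 < G.egirth) (t : Set V) :
    iIndepFun (fun w : ↥(G.neighborSet u \ t) ↦ branchColouring G u w i)
      μ[|relevantNbrsEv G i u t] := by
  have : Finite ↥(insert u (G.neighborSet u \ t)) := (hfin.sdiff.insert u).to_subtype
  have hg5 : 5 < G.egirth := lt_of_lt_of_le (by decide) (le_add_self.trans hg.le)
  have hroot (x) : MeasurableSet[labelsNear (prune G u t) x (i + 2)] (rootEv G i u t x) :=
    measurableSet_rootEv fun _ hy ↦ measurable_mem_labels (hy.trans (by gcongr; exact one_le_two))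
  have hindep : iIndep (fun x : ↥(insert u (G.neighborSet u \ t)) ↦
      labelsNear (prune G u t) x (i + 2)) μ := by
    refine iIndep_labelsNear hμ.2.1 fun x hx y hy hxy ↦ lt_of_add_lt_add_right (a := 2) ?_
    calc 2 * ((i : ℕ∞) + 2) + 2 = 2 * i + 6 := by ring
      _ < G.egirth := hg
      _ ≤ (prune G u t).edist x y + 2 := egirth_le_edist_prune_add_two hx hy hxy
  have hcond := iIndep_cond_iInter (fun x ↦ labelsNear_le_pi _ _ _) hindep (fun x ↦ hroot x)
    (relevantNbrsEv_eq_iInter_rootEv G i u t ▸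
      measure_relevantNbrsEv_ne_zero hμ hp₀ hp hfin i t)
  rw [← relevantNbrsEv_eq_iInter_rootEv] at hcond
  have hpruned : iIndepFun (fun (w : ↥(G.neighborSet u \ t)) ω (x : Branch G u w) ↦
      colourAt (prune G u t) (labels ω) i x) μ[|relevantNbrsEv G i u t] :=
    iIndep_of_iIndep_of_le (hcond.precomp (inclusion_injective (subset_insert _ _)))
      fun w ↦ (measurable_branchColouring_prune hg5 w.2.1 t i).comap_le
  have hmeas : MeasurableSet (relevantNbrsEv G i u t) := by
    rw [relevantNbrsEv_eq_iInter_rootEv]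
    exact .iInter fun x ↦ labelsNear_le_pi _ _ _ _ (hroot x)
  refine hpruned.congr fun w ↦ ae_cond_of_forall_mem hmeas fun ω hω ↦ funext fun x ↦ ?_
  exact (colourAt_congr (adj_congr_of_mem_relevantNbrsEv hω) x).symm

theorem measure_iInter_branchColouring_eq_prod [Countable V] {P : Measure (V → ℕ → Bool)}
    {A : Set V} {i : ℕ} (h : iIndepFun (fun w : A ↦ branchColouring G u w i) P) {ι : Type*}
    {v : ι → V} (hv : Function.Injective v) {s : Finset ι} (hs : ∀ j ∈ s, v j ∈ A)
    (X : ι → V → Colour) :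
    P (⋂ j ∈ s, {ω | ∀ x ∈ Branch G u (v j), colourAt G (labels ω) i x = X j x}) =
      ∏ j ∈ s, P {ω | ∀ x ∈ Branch G u (v j), colourAt G (labels ω) i x = X j x} := by
  have hpre (j) : {ω | ∀ x ∈ Branch G u (v j), colourAt G (labels ω) i x = X j x} =
      branchColouring G u (v j) i ⁻¹' {(Branch G u (v j)).domRestrict (X j)} := by
    ext ω
    simp [branchColouring, funext_iff, domRestrict_apply]
  have hsub : Function.Injective fun j : s ↦ (⟨v j, hs j j.2⟩ : A) :=
    fun a b hab ↦ Subtype.ext (hv (congrArg Subtype.val hab))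
  have hprod := (h.precomp hsub).measure_inter_preimage_eq_mul Finset.univ
    (sets := fun j ↦ {(Branch G u (v j)).domRestrict (X j)}) fun _ _ ↦ measurableSet_singleton _
  simp only [← hpre, Finset.mem_univ, iInter_true, iInter_subtype] at hprod
  rwa [← Finset.prod_coe_sort s]

theorem branch_colourings_conditionally_independent_general [Countable V]
    {ι : Type*} [Fintype ι] [DecidableEq ι]
    (hμ : IsLabelMeasure μ p₀ p) (hp₀ : p₀ ∈ Ioo (0 : ℝ) 1) (hp : p ∈ Ioo (0 : ℝ) 1)
    (hfin : (G.neighborSet u).Finite) {v : ι → V} (hadj : ∀ j, G.Adj u (v j))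
    (hinj : Function.Injective v) {i : ℕ} (hg : 2 * i + 6 < G.egirth) (X : ι → V → Colour) :
    (μ[|WEv G i u]
        (⋂ j, {ω | ∀ x ∈ Branch G u (v j), colourAt G (labels ω) i x = X j x})
      = ∏ j, μ[|WEv G i u]
          {ω | ∀ x ∈ Branch G u (v j), colourAt G (labels ω) i x = X j x}) ∧
    (∀ l : ι,
      μ[|BEv G i u ∩ RLeEv G i (v l)]
          (⋂ j ∈ Finset.univ.erase l,
            {ω | ∀ x ∈ Branch G u (v j), colourAt G (labels ω) i x = X j x})
        = ∏ j ∈ Finset.univ.erase l,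
            μ[|BEv G i u ∩ RLeEv G i (v l)]
              {ω | ∀ x ∈ Branch G u (v j), colourAt G (labels ω) i x = X j x}) := by
  refine ⟨?_, fun l ↦ ?_⟩
  · rw [WEv_eq_relevantNbrsEv]
    simpa using measure_iInter_branchColouring_eq_prod
      (iIndepFun_branchColouring_cond hμ hp₀ hp hfin hg ∅) hinj (s := Finset.univ)
      (fun j _ ↦ ⟨hadj j, notMem_empty _⟩) X
  · rw [BEv_inter_RLeEv_eq_relevantNbrsEv (hadj l)]
    exact measure_iInter_branchColouring_eq_prod
      (iIndepFun_branchColouring_cond hμ hp₀ hp hfin hg {v l}) hinj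
      (fun j hj ↦ ⟨hadj j, hinj.ne (Finset.ne_of_mem_erase hj)⟩) X

end Conditioning

/-- Conditional on `u` being white at time `i` (resp. on `u` being blue
with `v l` having a relevant label `≤ i`), the colourings at time `i` of the branches
`T_j²` hanging from the neighbours of `u` are mutually independent. -/
theorem branch_colourings_conditionally_independent
    [Fintype V] (r g : ℕ) (G : SimpleGraph V)
    (hreg : IsRegular G r) (hg : (g : ℕ∞) ≤ G.egirth)
    (p₀ p : ℝ) (hp₀ : p₀ ∈ Ioo (0 : ℝ) 1) (hp : p ∈ Ioo (0 : ℝ) 1)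
    (μ : Measure (V → ℕ → Bool)) (hμ : IsLabelMeasure μ p₀ p)
    (u : V) (v : Fin r → V) (hadj : ∀ j, G.Adj u (v j)) (hinj : Function.Injective v)
    (i k : ℕ) (hik : 2 * (i + 2) < g - 2)
    (X : Fin r → V → Colour) :
    (μ[|WEv G i u]
        (⋂ j, {ω | ∀ x ∈ Branch G u (v j), colourAt G (labels ω) i x = X j x})
      = ∏ j, μ[|WEv G i u]
          {ω | ∀ x ∈ Branch G u (v j), colourAt G (labels ω) i x = X j x}) ∧
    (∀ l : Fin r,
      μ[|BEv G i u ∩ RLeEv G i (v l)]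
          (⋂ j ∈ Finset.univ.erase l,
            {ω | ∀ x ∈ Branch G u (v j), colourAt G (labels ω) i x = X j x})
        = ∏ j ∈ Finset.univ.erase l,
            μ[|BEv G i u ∩ RLeEv G i (v l)]
              {ω | ∀ x ∈ Branch G u (v j), colourAt G (labels ω) i x = X j x}) := by
  refine branch_colourings_conditionally_independent_general hμ hp₀ hp (toFinite _) hadj hinj
    (lt_of_lt_of_le ?_ hg) X
  exact_mod_cast (by lia : 2 * i + 6 < g)

end InducedForest
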